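/- There is a constant d > 0, depending only on C_g and ‖f'‖_∞ (one may take d = 2(1 + ‖f'‖_∞ + 2C_g)), such that for every u in the Schwartz space 𝒮(ℝ, ℂ⁴) and every λ ≥ 1: |⟨Nu, H₀u⟩ − ⟨H₀u, Nu⟩| ≤ d·⟨Nu, u⟩. -/

import Mathlib

noncomputable section

open MeasureTheory

abbrev V4 : Type := EuclideanSpace ℂ (Fin 4)

/-- A `4 × 4` complex matrix acting on `ℂ⁴` as a continuous linear map. -/
def Mop (A : Matrix (Fin 4) (Fin 4) ℂ) : V4 →L[ℂ] V4 := Matrix.toEuclideanCLM (𝕜 := ℂ) A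

/-- The `L²` inner product `⟨u, v⟩ = ∫ ⟨u(x), v(x)⟩ dx` (conjugate-linear in the first slot). -/
def L2inner (u v : ℝ → V4) : ℂ := ∫ x : ℝ, (inner ℂ (u x) (v x) : ℂ)

/-- The `L²` norm `‖u‖ = (∫ ‖u(x)‖² dx)^{1/2}`. -/
def L2norm (u : ℝ → V4) : ℝ := Real.sqrt (∫ x : ℝ, ‖u x‖ ^ 2)

/-- The operator `D = −i d/dx`. -/
def Dop (u : ℝ → V4) : ℝ → V4 := fun x => (-Complex.I) • deriv u x

/-- The per-mode free Dirac Hamiltonian `H₀u = Γ¹Du + λgΓ²u + fu`. -/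
def H0op (Γ1 Γ2 : Matrix (Fin 4) (Fin 4) ℂ) (g f : ℝ → ℝ) (lam : ℝ) (u : ℝ → V4) : ℝ → V4 :=
  fun x => Mop Γ1 (Dop u x) + (lam * g x) • Mop Γ2 (u x) + f x • u x

/-- The operator `Qu = −u'' + λ²g²u`. -/
def Qop (g : ℝ → ℝ) (lam : ℝ) (u : ℝ → V4) : ℝ → V4 :=
  fun x => -(deriv (deriv u) x) + (lam ^ 2 * g x ^ 2) • u x

/-- The comparison operator `Nu = Qu + (1 + x²)u`. -/
def Nop (g : ℝ → ℝ) (lam : ℝ) (u : ℝ → V4) : ℝ → V4 :=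
  fun x => Qop g lam u x + (1 + x ^ 2) • u x

lemma Mop_symm {A : Matrix (Fin 4) (Fin 4) ℂ} (hA : A.IsHermitian) (a b : V4) :
    (inner ℂ (Mop A a) (b) : ℂ) = (inner ℂ (a) (Mop A b) : ℂ) := by
  have h := (Matrix.isSymmetric_toEuclideanLin_iff (A := A)).2 hA
  exact h a b

lemma Mop_norm {A : Matrix (Fin 4) (Fin 4) ℂ} (hA : A.IsHermitian) (hs : A * A = 1) (a : V4) :
    ‖Mop A a‖ = ‖a‖ := by
  have h1 : Mop A (Mop A a) = a := by
    have : (Mop A * Mop A) = 1 := by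
      unfold Mop
      rw [← map_mul, hs, map_one]
    exact congrArg (fun T : V4 →L[ℂ] V4 => T a) this
  have h2 : (inner ℂ (Mop A a) (Mop A a) : ℂ) = (inner ℂ (a) (a) : ℂ) := by rw [Mop_symm hA, h1]
  rw [inner_self_eq_norm_sq_to_K, inner_self_eq_norm_sq_to_K] at h2
  have h3 : ‖Mop A a‖ ^ 2 = ‖a‖ ^ 2 := by exact_mod_cast h2
  exact (sq_eq_sq₀ (norm_nonneg _) (norm_nonneg _)).1 h3

lemma rsmul_left (r : ℝ) (a b : V4) : (inner ℂ (r • a) (b) : ℂ) = (r : ℂ) * (inner ℂ (a) (b) : ℂ) := by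
  rw [← Complex.coe_smul, inner_smul_left, Complex.conj_ofReal]

lemma rsmul_right (r : ℝ) (a b : V4) : (inner ℂ (a) (r • b) : ℂ) = (r : ℂ) * (inner ℂ (a) (b) : ℂ) := by
  rw [← Complex.coe_smul, inner_smul_right]

lemma Mop_rsmul (A : Matrix (Fin 4) (Fin 4) ℂ) (r : ℝ) (a : V4) :
    Mop A (r • a) = r • Mop A a := by
  rw [← Complex.coe_smul, map_smul, Complex.coe_smul]

/-- Continuous with decay at least `(1 + x²)⁻¹`. -/
def Good (A : ℝ → V4) : Prop := Continuous A ∧ ∃ C : ℝ, ∀ x, ‖A x‖ ≤ C * (1 + x ^ 2)⁻¹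

lemma Good.add {A B : ℝ → V4} (hA : Good A) (hB : Good B) : Good (fun x => A x + B x) := by
  obtain ⟨cA, C, hC⟩ := hA
  obtain ⟨cB, K, hK⟩ := hB
  refine ⟨cA.add cB, C + K, fun x => ?_⟩
  have := norm_add_le (A x) (B x)
  have h1 := hC x
  have h2 := hK x
  rw [add_mul]; linarith

lemma Good.clm {A : ℝ → V4} (hA : Good A) (T : V4 →L[ℂ] V4) : Good (fun x => T (A x)) := by
  obtain ⟨cA, C, hC⟩ := hA
  refine ⟨T.continuous.comp cA, ‖T‖ * C, fun x => ?_⟩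
  rw [mul_assoc]
  exact (T.le_opNorm _).trans (mul_le_mul_of_nonneg_left (hC x) (norm_nonneg _))

lemma Good.csmul {A : ℝ → V4} (hA : Good A) (z : ℂ) : Good (fun x => z • A x) := by
  obtain ⟨cA, C, hC⟩ := hA
  refine ⟨cA.const_smul z, ‖z‖ * C, fun x => ?_⟩
  rw [mul_assoc, norm_smul]
  exact mul_le_mul_of_nonneg_left (hC x) (norm_nonneg _)

lemma Good.neg {A : ℝ → V4} (hA : Good A) : Good (fun x => - A x) := by
  obtain ⟨cA, C, hC⟩ := hA
  exact ⟨cA.neg, C, fun x => by rw [norm_neg]; exact hC x⟩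

lemma Good.bsmul {A : ℝ → V4} (hA : Good A) {c : ℝ → ℝ} (hc : Continuous c) {K : ℝ}
    (hK : ∀ x, |c x| ≤ K) : Good (fun x => c x • A x) := by
  obtain ⟨cA, C, hC⟩ := hA
  refine ⟨hc.smul cA, K * C, fun x => ?_⟩
  rw [mul_assoc, norm_smul, Real.norm_eq_abs]
  exact mul_le_mul (hK x) (hC x) (norm_nonneg _) ((abs_nonneg _).trans (hK x))

lemma Good.integrable {A B : ℝ → V4} (hA : Good A) (hB : Good B) :
    Integrable (fun x => (inner ℂ (A x) (B x) : ℂ)) := by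
  obtain ⟨cA, C, hC⟩ := hA
  obtain ⟨cB, K, hK⟩ := hB
  refine (integrable_inv_one_add_sq.const_mul (C * K)).mono'
    (cA.inner cB).aestronglyMeasurable (Filter.Eventually.of_forall fun x => ?_)
  have hp : 0 < (1 + x ^ 2)⁻¹ := by positivity
  have hp1 : (1 + x ^ 2)⁻¹ ≤ 1 := inv_le_one_of_one_le₀ (by nlinarith [sq_nonneg x])
  have hC0 : 0 ≤ C := by
    have := (norm_nonneg _).trans (hC x)
    exact nonneg_of_mul_nonneg_left this hp
  have hK0 : 0 ≤ K := by
    have := (norm_nonneg _).trans (hK x)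
    exact nonneg_of_mul_nonneg_left this hp
  calc ‖(inner ℂ (A x) (B x) : ℂ)‖ ≤ ‖A x‖ * ‖B x‖ := norm_inner_le_norm _ _
    _ ≤ (C * (1 + x ^ 2)⁻¹) * (K * (1 + x ^ 2)⁻¹) :=
        mul_le_mul (hC x) (hK x) (norm_nonneg _) (by positivity)
    _ = (C * K * (1 + x ^ 2)⁻¹) * (1 + x ^ 2)⁻¹ := by ring
    _ ≤ (C * K * (1 + x ^ 2)⁻¹) * 1 := mul_le_mul_of_nonneg_left hp1 (by positivity)
    _ = _ := by ring

lemma good_weight (v : SchwartzMap ℝ V4) : Good (fun x => (1 + x ^ 2) • v x) := by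
  obtain ⟨C0, -, h0⟩ := v.decay 0 0
  obtain ⟨C2, -, h2⟩ := v.decay 2 0
  obtain ⟨C4, -, h4⟩ := v.decay 4 0
  refine ⟨(by fun_prop : Continuous fun x : ℝ => (1 + x ^ 2)).smul v.continuous,
    C0 + 2 * C2 + C4, fun x => ?_⟩
  have a0 := h0 x
  have a2 := h2 x
  have a4 := h4 x
  simp only [norm_iteratedFDeriv_zero, Real.norm_eq_abs, pow_zero, one_mul] at a0 a2 a4
  have e4 : |x| ^ 4 = x ^ 4 := by
    rw [show (4:ℕ) = 2 * 2 from rfl, pow_mul, sq_abs, ← pow_mul]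
  rw [sq_abs] at a2
  rw [e4] at a4
  have hp : 0 < 1 + x ^ 2 := by positivity
  rw [norm_smul, Real.norm_eq_abs, abs_of_pos hp, ← div_eq_mul_inv, le_div_iff₀ hp]
  nlinarith

lemma Good.mul_bdd {A : ℝ → V4} (hA : Good (fun x => (1 + x ^ 2) • A x)) {c : ℝ → ℝ}
    (hc : Continuous c) {K : ℝ} (hK : ∀ x, |c x| ≤ K * (1 + x ^ 2)) :
    Good (fun x => c x • A x) := by
  have h := hA.bsmul (c := fun x => c x / (1 + x ^ 2)) (K := K)
    (hc.div (by fun_prop) (fun x => by positivity)) (fun x => by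
      have hp : 0 < 1 + x ^ 2 := by positivity
      rw [abs_div, abs_of_pos hp, div_le_iff₀ hp]
      exact hK x)
  convert h using 2 with x
  have hp : 1 + x ^ 2 ≠ 0 := by positivity
  rw [smul_smul, div_mul_cancel₀ _ hp]

lemma good_schwartz (v : SchwartzMap ℝ V4) : Good v := by
  have h := (good_weight v).mul_bdd (c := fun _ => 1) continuous_const (K := 1)
    (fun x => by rw [abs_one]; nlinarith [sq_nonneg x])
  simpa using h

lemma pointwise_id {A B : Matrix (Fin 4) (Fin 4) ℂ} (hA : A.IsHermitian) (hB : B.IsHermitian)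
    (a b c : V4) (l g f P g' f' P' : ℝ) :
    (inner ℂ (-c + P • a) (Mop A ((-Complex.I) • b) + (l * g) • Mop B a + f • a) : ℂ)
      - (inner ℂ (Mop A ((-Complex.I) • b) + (l * g) • Mop B a + f • a) (-c + P • a) : ℂ)
    = (Complex.I * ((inner ℂ (b) (Mop A c) : ℂ) + (inner ℂ (c) (Mop A b) : ℂ))
        - (l * g' * ((inner ℂ (b) (Mop B a) : ℂ) - (inner ℂ (Mop B a) (b) : ℂ))
          + l * g * (((inner ℂ (b) (Mop B b) : ℂ) + (inner ℂ (c) (Mop B a) : ℂ)) - ((inner ℂ (Mop B a) (c) : ℂ) + (inner ℂ (Mop B b) (b) : ℂ))))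
        - (f' * ((inner ℂ (b) (a) : ℂ) - (inner ℂ (a) (b) : ℂ)) + f * (((inner ℂ (b) (b) : ℂ) + (inner ℂ (c) (a) : ℂ)) - ((inner ℂ (a) (c) : ℂ) + (inner ℂ (b) (b) : ℂ))))
        - Complex.I * (P' * (inner ℂ (a) (Mop A a) : ℂ) + P * ((inner ℂ (a) (Mop A b) : ℂ) + (inner ℂ (b) (Mop A a) : ℂ))))
      + (l * g' * ((inner ℂ (b) (Mop B a) : ℂ) - (inner ℂ (Mop B a) (b) : ℂ)) + f' * ((inner ℂ (b) (a) : ℂ) - (inner ℂ (a) (b) : ℂ))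
        + Complex.I * P' * (inner ℂ (a) (Mop A a) : ℂ)) := by
  simp only [map_smul, Mop_rsmul, inner_add_left, inner_add_right, inner_neg_left, inner_neg_right,
    rsmul_left, rsmul_right, inner_smul_left, inner_smul_right, Mop_symm hA, Mop_symm hB,
    map_neg, Complex.conj_I]
  push_cast
  ring

lemma pointwise_bound {A B : Matrix (Fin 4) (Fin 4) ℂ} (hA : A.IsHermitian) (hB : B.IsHermitian)
    (hA2 : A * A = 1) (hB2 : B * B = 1) (a b : V4) (x l g g' f' Cg M : ℝ)
    (hl : 1 ≤ l) (hC : 0 < Cg) (hg' : |g'| ≤ Cg * |g|) (hf' : |f'| ≤ M) :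
    ‖(l * g' * ((inner ℂ (b) (Mop B a) : ℂ) - (inner ℂ (Mop B a) (b) : ℂ)) + f' * ((inner ℂ (b) (a) : ℂ) - (inner ℂ (a) (b) : ℂ))
        + Complex.I * (2 * x + 2 * l ^ 2 * g * g' : ℝ) * (inner ℂ (a) (Mop A a) : ℂ) : ℂ)‖
      ≤ 2 * (1 + M + 2 * Cg) * (‖b‖ ^ 2 + (l ^ 2 * g ^ 2 + (1 + x ^ 2)) * ‖a‖ ^ 2) := by
  have n1 : ‖(inner ℂ (b) (Mop B a) : ℂ) - (inner ℂ (Mop B a) (b) : ℂ)‖ ≤ 2 * (‖a‖ * ‖b‖) := by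
    have h1 := norm_inner_le_norm (𝕜 := ℂ) b (Mop B a)
    have h2 := norm_inner_le_norm (𝕜 := ℂ) (Mop B a) b
    rw [Mop_norm hB hB2] at h1 h2
    have := norm_sub_le (inner ℂ (b) (Mop B a) : ℂ) (inner ℂ (Mop B a) (b) : ℂ)
    linarith
  have n2 : ‖(inner ℂ (b) (a) : ℂ) - (inner ℂ (a) (b) : ℂ)‖ ≤ 2 * (‖a‖ * ‖b‖) := by
    have h1 := norm_inner_le_norm (𝕜 := ℂ) b a
    have h2 := norm_inner_le_norm (𝕜 := ℂ) a b
    have := norm_sub_le (inner ℂ (b) (a) : ℂ) (inner ℂ (a) (b) : ℂ)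
    linarith
  have n3 : ‖(inner ℂ (a) (Mop A a) : ℂ)‖ ≤ ‖a‖ ^ 2 := by
    have h1 := norm_inner_le_norm (𝕜 := ℂ) a (Mop A a)
    rw [Mop_norm hA hA2] at h1
    nlinarith
  have hl0 : 0 ≤ l := by linarith
  have t1 : ‖(l * g' * ((inner ℂ (b) (Mop B a) : ℂ) - (inner ℂ (Mop B a) (b) : ℂ)) : ℂ)‖
      ≤ Cg * (2 * (l * |g| * ‖a‖ * ‖b‖)) := by
    rw [norm_mul, norm_mul, Complex.norm_real, Complex.norm_real, Real.norm_eq_abs,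
      Real.norm_eq_abs, abs_of_nonneg hl0]
    calc l * |g'| * ‖(inner ℂ (b) (Mop B a) : ℂ) - (inner ℂ (Mop B a) (b) : ℂ)‖
        ≤ l * (Cg * |g|) * (2 * (‖a‖ * ‖b‖)) := by gcongr
      _ = _ := by ring
  have t2 : ‖(f' * ((inner ℂ (b) (a) : ℂ) - (inner ℂ (a) (b) : ℂ)) : ℂ)‖ ≤ M * (2 * (‖a‖ * ‖b‖)) := by
    rw [norm_mul, Complex.norm_real, Real.norm_eq_abs]
    gcongr
    exact (abs_nonneg _).trans hf'
  have hP : |2 * x + 2 * l ^ 2 * g * g'| ≤ (1 + x ^ 2) + 2 * Cg * (l ^ 2 * g ^ 2) := by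
    have h1 : |2 * x| ≤ 1 + x ^ 2 := by
      rw [abs_le]; constructor <;> nlinarith [sq_nonneg (x - 1), sq_nonneg (x + 1)]
    have h2 : |2 * l ^ 2 * g * g'| ≤ 2 * Cg * (l ^ 2 * g ^ 2) := by
      rw [abs_mul, abs_mul, abs_of_nonneg (by positivity : 0 ≤ 2 * l ^ 2)]
      calc 2 * l ^ 2 * |g| * |g'| ≤ 2 * l ^ 2 * |g| * (Cg * |g|) := by gcongr
        _ = 2 * Cg * (l ^ 2 * |g| ^ 2) := by ring
        _ = _ := by rw [sq_abs]
    exact (abs_add_le _ _).trans (add_le_add h1 h2)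
  have t3 : ‖(Complex.I * (2 * x + 2 * l ^ 2 * g * g' : ℝ) * (inner ℂ (a) (Mop A a) : ℂ) : ℂ)‖
      ≤ ((1 + x ^ 2) + 2 * Cg * (l ^ 2 * g ^ 2)) * ‖a‖ ^ 2 := by
    rw [norm_mul, norm_mul, Complex.norm_I, one_mul, Complex.norm_real, Real.norm_eq_abs]
    gcongr
  have hM : 0 ≤ M := (abs_nonneg _).trans hf'
  have q1 : 2 * (l * |g| * ‖a‖ * ‖b‖) ≤ ‖b‖ ^ 2 + l ^ 2 * g ^ 2 * ‖a‖ ^ 2 := by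
    have := sq_nonneg (l * |g| * ‖a‖ - ‖b‖)
    have e : (l * |g| * ‖a‖) ^ 2 = l ^ 2 * g ^ 2 * ‖a‖ ^ 2 := by
      rw [mul_pow, mul_pow, sq_abs]
    nlinarith
  have q2 : 2 * (‖a‖ * ‖b‖) ≤ ‖b‖ ^ 2 + ‖a‖ ^ 2 := by
    nlinarith [sq_nonneg (‖a‖ - ‖b‖)]
  have p1 : 0 ≤ ‖b‖ ^ 2 := by positivity
  have p2 : 0 ≤ ‖a‖ ^ 2 := by positivity
  have p3 : 0 ≤ l ^ 2 * g ^ 2 * ‖a‖ ^ 2 := by positivity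
  have p4 : 0 ≤ x ^ 2 * ‖a‖ ^ 2 := by positivity
  have r1 := mul_le_mul_of_nonneg_left q1 hC.le
  have r2 := mul_le_mul_of_nonneg_left q2 hM
  have m1 := mul_nonneg hM p1
  have m2 := mul_nonneg hM p2
  have m3 := mul_nonneg hM p3
  have m4 := mul_nonneg hM p4
  have c1 := mul_nonneg hC.le p1
  have c2 := mul_nonneg hC.le p2
  have c3 := mul_nonneg hC.le p3
  have c4 := mul_nonneg hC.le p4
  refine (norm_add₃_le).trans ?_
  nlinarith

/-- second Nelson hypothesis (commutator bound) for `(H₀, N)`, with constant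
`d = 2(1 + ‖f'‖_∞ + 2C_g)` uniform in the angular eigenvalue `λ ≥ 1`:
`|⟨Nu, H₀u⟩ − ⟨H₀u, Nu⟩| ≤ d·⟨Nu, u⟩` for every Schwartz `u`. -/
theorem nelson_second_hypothesis_H0
    (Γ1 Γ2 : Matrix (Fin 4) (Fin 4) ℂ)
    (hΓ1_herm : Γ1.IsHermitian) (hΓ2_herm : Γ2.IsHermitian)
    (hΓ1_sq : Γ1 * Γ1 = 1) (hΓ2_sq : Γ2 * Γ2 = 1)
    (hanticomm : Γ1 * Γ2 + Γ2 * Γ1 = 0)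
    (g : ℝ → ℝ) (hg_smooth : ContDiff ℝ (⊤ : ℕ∞) g) (Cb : ℝ) (hg_bdd : ∀ x : ℝ, |g x| ≤ Cb)
    (Cg : ℝ) (hCg : 0 < Cg) (hg' : ∀ x : ℝ, |deriv g x| ≤ Cg * |g x|)
    (f : ℝ → ℝ) (hf_smooth : ContDiff ℝ (⊤ : ℕ∞) f)
    (Mf : ℝ) (hf_bdd : ∀ x : ℝ, |f x| ≤ Mf)
    (Mf' : ℝ) (hf'_bdd : ∀ x : ℝ, |deriv f x| ≤ Mf') :
    0 < 2 * (1 + Mf' + 2 * Cg) ∧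
    ∀ (u : SchwartzMap ℝ V4) (lam : ℝ), 1 ≤ lam →
      ‖L2inner (Nop g lam ⇑u) (H0op Γ1 Γ2 g f lam ⇑u)
          - L2inner (H0op Γ1 Γ2 g f lam ⇑u) (Nop g lam ⇑u)‖ ≤
        2 * (1 + Mf' + 2 * Cg) * (L2inner (Nop g lam ⇑u) ⇑u).re := by
  have hMf' : 0 ≤ Mf' := (abs_nonneg _).trans (hf'_bdd 0)
  refine ⟨by positivity, fun u lam hlam => ?_⟩
  set u1 : SchwartzMap ℝ V4 := SchwartzMap.derivCLM ℂ V4 u with hu1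
  set u2 : SchwartzMap ℝ V4 := SchwartzMap.derivCLM ℂ V4 u1 with hu2
  have d0 : ∀ x, HasDerivAt u (u1 x) x := fun x => u.hasDerivAt x
  have d1 : ∀ x, HasDerivAt u1 (u2 x) x := fun x => u1.hasDerivAt x
  have e1 : deriv ⇑u = ⇑u1 := rfl
  have e2 : deriv ⇑u1 = ⇑u2 := rfl
  have hgd : ∀ x, HasDerivAt g (deriv g x) x := fun x =>
    ((hg_smooth.differentiable (by simp)) x).hasDerivAt
  have hfd : ∀ x, HasDerivAt f (deriv f x) x := fun x =>
    ((hf_smooth.differentiable (by simp)) x).hasDerivAt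
  have hgc : Continuous g := hg_smooth.continuous
  have hfc : Continuous f := hf_smooth.continuous
  have hgc' : Continuous (deriv g) := hg_smooth.continuous_deriv (by simp)
  have hfc' : Continuous (deriv f) := hf_smooth.continuous_deriv (by simp)
  have hCb : 0 ≤ Cb := (abs_nonneg _).trans (hg_bdd 0)
  have hg'b : ∀ x, |deriv g x| ≤ Cg * Cb := fun x =>
    (hg' x).trans (mul_le_mul_of_nonneg_left (hg_bdd x) hCg.le)
  set P : ℝ → ℝ := fun x => lam ^ 2 * g x ^ 2 + (1 + x ^ 2) with hP
  set P' : ℝ → ℝ := fun x => 2 * x + 2 * lam ^ 2 * g x * deriv g x with hP'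
  have hPd : ∀ x, HasDerivAt P (P' x) x := fun x => by
    have h := (((hgd x).pow 2).const_mul (lam ^ 2)).add (((hasDerivAt_id x).pow 2).const_add 1)
    refine HasDerivAt.congr_deriv h ?_
    simp only [hP', id, Nat.cast_ofNat]
    ring
  have hg2 : ∀ x, g x ^ 2 ≤ Cb ^ 2 := fun x => by
    rw [← sq_abs (g x)]
    exact pow_le_pow_left₀ (abs_nonneg _) (hg_bdd x) 2
  have hPb : ∀ x, |P x| ≤ (lam ^ 2 * Cb ^ 2 + 1) * (1 + x ^ 2) := fun x => by
    have h1 := mul_le_mul_of_nonneg_left (hg2 x) (sq_nonneg lam)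
    have h2 : 0 ≤ lam ^ 2 * Cb ^ 2 * x ^ 2 := by positivity
    rw [abs_of_nonneg (by simp only [hP]; positivity)]
    simp only [hP]
    nlinarith
  have hPb' : ∀ x, |P' x| ≤ (2 * lam ^ 2 * Cb * (Cg * Cb) + 1) * (1 + x ^ 2) := fun x => by
    have h1 : |2 * x| ≤ 1 + x ^ 2 := by
      rw [abs_le]; constructor <;> nlinarith [sq_nonneg (x - 1), sq_nonneg (x + 1)]
    have h2 : |2 * lam ^ 2 * g x * deriv g x| ≤ 2 * lam ^ 2 * Cb * (Cg * Cb) := by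
      rw [abs_mul, abs_mul, abs_of_nonneg (by positivity : 0 ≤ 2 * lam ^ 2)]
      have := hg_bdd x
      have := hg'b x
      gcongr
    have h3 : 0 ≤ 2 * lam ^ 2 * Cb * (Cg * Cb) * x ^ 2 := by positivity
    refine (abs_add_le _ _).trans ?_
    nlinarith
  have hPc : Continuous P := by fun_prop
  have hPc' : Continuous P' := by fun_prop
  -- decay of the building blocks
  have G0 : Good u := good_schwartz u
  have G1 : Good u1 := good_schwartz u1
  have G2 : Good u2 := good_schwartz u2
  have GP : Good (fun x => P x • u x) := (good_weight u).mul_bdd hPc hPb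
  have GP' : Good (fun x => P' x • u x) := (good_weight u).mul_bdd hPc' hPb'
  have Gg1 : Good (fun x => g x • u1 x) := G1.bsmul hgc hg_bdd
  have Gf1 : Good (fun x => f x • u1 x) := G1.bsmul hfc hf_bdd
  have Gg1' : Good (fun x => deriv g x • u1 x) := G1.bsmul hgc' hg'b
  have Gf1' : Good (fun x => deriv f x • u1 x) := G1.bsmul hfc' hf'_bdd
  have GB : Good (fun x => Mop Γ2 (u x)) := G0.clm _
  have GA : Good (fun x => Mop Γ1 (u x)) := G0.clm _
  have GA1 : Good (fun x => Mop Γ1 (u1 x)) := G1.clm _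
  have eN : Nop g lam ⇑u = fun x => -u2 x + P x • u x := by
    funext x
    simp only [Nop, Qop, e1, e2, hP, add_smul, add_assoc]
  have eH : H0op Γ1 Γ2 g f lam ⇑u =
      fun x => Mop Γ1 ((-Complex.I) • u1 x) + (lam * g x) • Mop Γ2 (u x) + f x • u x := by
    funext x
    simp only [H0op, Dop, e1]
  have GN : Good (Nop g lam ⇑u) := by
    rw [eN]; exact G2.neg.add GP
  have GH : Good (H0op Γ1 Γ2 g f lam ⇑u) := by
    rw [eH]
    refine (((G1.csmul _).clm _).add (GB.bsmul (K := |lam| * Cb) (by fun_prop) fun x => ?_)).add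
      (G0.bsmul hfc hf_bdd)
    rw [abs_mul]
    exact mul_le_mul_of_nonneg_left (hg_bdd x) (abs_nonneg _)
  -- the remainder
  set R : ℝ → ℂ := fun x => lam * deriv g x * ((inner ℂ (u1 x) (Mop Γ2 (u x)) : ℂ) - (inner ℂ (Mop Γ2 (u x)) (u1 x) : ℂ))
    + deriv f x * ((inner ℂ (u1 x) (u x) : ℂ) - (inner ℂ (u x) (u1 x) : ℂ)) + Complex.I * P' x * (inner ℂ (u x) (Mop Γ1 (u x)) : ℂ) with hR
  set F : ℝ → ℂ := fun x => Complex.I * (inner ℂ (u1 x) (Mop Γ1 (u1 x)) : ℂ)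
    - lam * g x * ((inner ℂ (u1 x) (Mop Γ2 (u x)) : ℂ) - (inner ℂ (Mop Γ2 (u x)) (u1 x) : ℂ))
    - f x * ((inner ℂ (u1 x) (u x) : ℂ) - (inner ℂ (u x) (u1 x) : ℂ)) - Complex.I * (P x * (inner ℂ (u x) (Mop Γ1 (u x)) : ℂ)) with hF
  have iR : Integrable R := by
    have h := (((Gg1'.integrable GB).sub (GB.integrable Gg1')).const_mul (lam : ℂ)).add
      ((Gf1'.integrable G0).sub (G0.integrable Gf1')) |>.add
      ((GP'.integrable GA).const_mul Complex.I)
    refine h.congr (Filter.Eventually.of_forall fun x => ?_)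
    simp only [hR, rsmul_left, rsmul_right, Pi.add_apply, Pi.sub_apply]
    ring
  have iF : Integrable F := by
    have h := (((G1.integrable GA1).const_mul Complex.I).sub
      (((Gg1.integrable GB).sub (GB.integrable Gg1)).const_mul (lam : ℂ))).sub
      ((Gf1.integrable G0).sub (G0.integrable Gf1)) |>.sub
      ((GP.integrable GA).const_mul Complex.I)
    refine h.congr (Filter.Eventually.of_forall fun x => ?_)
    simp only [hF, rsmul_left, rsmul_right, Pi.sub_apply]
    ring
  set Z : ℝ → ℂ := fun x => (inner ℂ (Nop g lam ⇑u x) (H0op Γ1 Γ2 g f lam ⇑u x) : ℂ)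
    - (inner ℂ (H0op Γ1 Γ2 g f lam ⇑u x) (Nop g lam ⇑u x) : ℂ) with hZ
  have iZ : Integrable Z := (GN.integrable GH).sub (GH.integrable GN)
  have dM : ∀ (A : Matrix (Fin 4) (Fin 4) ℂ) (v : ℝ → V4) (v' : V4) (x : ℝ),
      HasDerivAt v v' x → HasDerivAt (fun y => Mop A (v y)) (Mop A v') x := by
    intro A v v' x h
    exact ((Mop A).restrictScalars ℝ).hasFDerivAt.comp_hasDerivAt x h
  have dF : ∀ x, HasDerivAt F (Z x - R x) x := by
    intro x
    have hB := dM Γ2 _ _ x (d0 x)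
    have hA := dM Γ1 _ _ x (d0 x)
    have hA1 := dM Γ1 _ _ x (d1 x)
    have k1 := ((d1 x).inner ℂ hA1).const_mul Complex.I
    have k2 := ((hgd x).ofReal_comp.const_mul (lam : ℂ)).mul
      (((d1 x).inner ℂ hB).sub (hB.inner ℂ (d1 x)))
    have k3 := ((hfd x).ofReal_comp).mul
      (((d1 x).inner ℂ (d0 x)).sub ((d0 x).inner ℂ (d1 x)))
    have k4 := (((hPd x).ofReal_comp).mul ((d0 x).inner ℂ hA)).const_mul Complex.I
    have k := ((k1.sub k2).sub k3).sub k4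
    refine k.congr_deriv ?_
    have id := pointwise_id hΓ1_herm hΓ2_herm (u x) (u1 x) (u2 x) lam (g x) (f x) (P x)
      (deriv g x) (deriv f x) (P' x)
    simp only [hZ, eN, eH, hR]
    rw [id]
    simp only [Pi.sub_apply]
    ring
  have key : L2inner (Nop g lam ⇑u) (H0op Γ1 Γ2 g f lam ⇑u)
      - L2inner (H0op Γ1 Γ2 g f lam ⇑u) (Nop g lam ⇑u) = ∫ x, R x := by
    have h0 := integral_eq_zero_of_hasDerivAt_of_integrable dF (iZ.sub iR) iF
    rw [integral_sub iZ iR] at h0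
    unfold L2inner
    rw [← integral_sub (GN.integrable GH) (GH.integrable GN)]
    exact sub_eq_zero.1 h0
  -- the quadratic form of N
  set E : ℝ → ℝ := fun x => ‖u1 x‖ ^ 2 + P x * ‖u x‖ ^ 2 with hE
  have eE : ∀ x, ((E x : ℝ) : ℂ) = (inner ℂ (u1 x) (u1 x) : ℂ) + (inner ℂ (P x • u x) (u x) : ℂ) := fun x => by
    rw [rsmul_left, inner_self_eq_norm_sq_to_K, inner_self_eq_norm_sq_to_K]
    simp [hE]
  have iEc : Integrable (fun x => ((E x : ℝ) : ℂ)) := by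
    simp only [eE]
    exact (G1.integrable G1).add (GP.integrable G0)
  have iE : Integrable E := by
    simpa using iEc.re
  have quad : (L2inner (Nop g lam ⇑u) ⇑u).re = ∫ x, E x := by
    have iNu := GN.integrable G0
    have dd : ∀ x, HasDerivAt (fun y => (inner ℂ (u1 y) (u y) : ℂ))
        (((E x : ℝ) : ℂ) - (inner ℂ (Nop g lam ⇑u x) (u x) : ℂ)) x := fun x => by
      refine ((d1 x).inner ℂ (d0 x)).congr_deriv ?_
      rw [eE, eN]
      simp only [inner_add_left, inner_neg_left]
      ring
    have h0 := integral_eq_zero_of_hasDerivAt_of_integrable dd (iEc.sub iNu) (G1.integrable G0)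
    rw [integral_sub iEc iNu] at h0
    unfold L2inner
    rw [← sub_eq_zero.1 h0, integral_complex_ofReal, Complex.ofReal_re]
  rw [key, quad, ← integral_const_mul]
  refine norm_integral_le_of_norm_le (iE.const_mul _) (Filter.Eventually.of_forall fun x => ?_)
  exact pointwise_bound hΓ1_herm hΓ2_herm hΓ1_sq hΓ2_sq (u x) (u1 x) x lam (g x) (deriv g x)
    (deriv f x) Cg Mf' hlam hCg (hg' x) (hf'_bdd x)
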